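/- The number of transfer systems on the grid poset {0,1,2,3} × {0,1} (the divisor lattice of p³q) is exactly 544. -/

import Mathlib

/-- A transfer system on the grid poset `{0,...,m} × {0,...,n}` (the product of
two chains, with componentwise order and componentwise meet): a relation
contained in the partial order, reflexive, transitive, and satisfying
restriction with respect to the meet. -/
def IsTransferSystemGrid (m n : ℕ) (R : ℕ × ℕ → ℕ × ℕ → Prop) : Prop :=
  (∀ a b, R a b → a.1 ≤ b.1 ∧ a.2 ≤ b.2 ∧ b.1 ≤ m ∧ b.2 ≤ n) ∧
  (∀ a : ℕ × ℕ, a.1 ≤ m → a.2 ≤ n → R a a) ∧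
  (∀ a b c, R a b → R b c → R a c) ∧
  (∀ k h p : ℕ × ℕ, R k h → p.1 ≤ h.1 → p.2 ≤ h.2 →
    R (min k.1 p.1, min k.2 p.2) p)

/-! In a transfer system on `L × {0, 1}`, write `R₀` and `R₁` for its restrictions to the two copies
of `L`, and `X a b` for `(a, 0) → (b, 1)`. The axioms say that `R₀` and `R₁` are transfer systems
on `L` with `R₁ ≤ R₀` and that `X` is a bridge between them. When `L` is a chain, restriction makes
the set of targets of each `a` an interval starting at `a` (or, for `X`, empty), so each of the
three relations is encoded by the function that sends `a` to the first point, from `a` on, that it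
does not reach. The axioms become inequalities between three such functions, and for a chain with
four points the triples satisfying them can be enumerated. -/

open Finset

/-- A transfer system on a meet-semilattice: a transitive and reflexive relation that refines the
order and is closed under restriction. -/
structure IsTransferSystem {L : Type*} [SemilatticeInf L] (R : L → L → Prop) : Prop where
  le {a b : L} : R a b → a ≤ b
  refl (a : L) : R a a
  trans {a b c : L} : R a b → R b c → R a c
  restrict {a b c : L} : R a b → c ≤ b → R (a ⊓ c) c

section Grid

variable {m n : ℕ}

/-- The embedding of the product of the chains `Fin (m + 1)` and `Fin (n + 1)` into `ℕ × ℕ`, whose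
range is the grid `{0,...,m} × {0,...,n}`. -/
def gridVal (p : Fin (m + 1) × Fin (n + 1)) : ℕ × ℕ := (p.1, p.2)

theorem gridVal_injective : Function.Injective (gridVal (m := m) (n := n)) := fun p q h => by
  simpa [gridVal, Prod.ext_iff, Fin.ext_iff] using h

theorem gridVal_inf (p q : Fin (m + 1) × Fin (n + 1)) :
    gridVal (p ⊓ q) = (min (gridVal p).1 (gridVal q).1, min (gridVal p).2 (gridVal q).2) := by
  simp [gridVal]

theorem exists_gridVal_eq {p : ℕ × ℕ} (h₁ : p.1 ≤ m) (h₂ : p.2 ≤ n) :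
    ∃ q : Fin (m + 1) × Fin (n + 1), gridVal q = p :=
  ⟨(⟨p.1, by omega⟩, ⟨p.2, by omega⟩), rfl⟩

theorem IsTransferSystemGrid.onFun_gridVal {R : ℕ × ℕ → ℕ × ℕ → Prop}
    (hR : IsTransferSystemGrid m n R) :
    IsTransferSystem (Function.onFun R (gridVal (m := m) (n := n))) := by
  obtain ⟨le, refl, trans, restrict⟩ := hR
  refine ⟨fun h => ?_, fun p => ?_, fun h h' => trans _ _ _ h h', fun {p q r} h hr => ?_⟩
  · exact ⟨(le _ _ h).1, (le _ _ h).2.1⟩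
  · exact refl _ (Nat.le_of_lt_succ p.1.isLt) (Nat.le_of_lt_succ p.2.isLt)
  · rw [Function.onFun, gridVal_inf]
    exact restrict _ _ _ h hr.1 hr.2

theorem IsTransferSystemGrid.map_onFun_gridVal {R : ℕ × ℕ → ℕ × ℕ → Prop}
    (hR : IsTransferSystemGrid m n R) :
    Relation.Map (Function.onFun R (gridVal (m := m) (n := n))) gridVal gridVal = R := by
  refine le_antisymm (Relation.map_onFun_le _) fun p q h => ?_
  obtain ⟨h₁, h₂, hq₁, hq₂⟩ := hR.1 p q h
  obtain ⟨p, rfl⟩ := exists_gridVal_eq (h₁.trans hq₁) (h₂.trans hq₂)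
  obtain ⟨q, rfl⟩ := exists_gridVal_eq hq₁ hq₂
  exact ⟨p, q, h, rfl, rfl⟩

theorem IsTransferSystem.map_gridVal {S : Fin (m + 1) × Fin (n + 1) → _ → Prop}
    (hS : IsTransferSystem S) : IsTransferSystemGrid m n (Relation.Map S gridVal gridVal) := by
  refine ⟨?_, fun p h₁ h₂ => ?_, ?_, ?_⟩
  · rintro _ _ ⟨p, q, h, rfl, rfl⟩
    exact ⟨(hS.le h).1, (hS.le h).2, Nat.le_of_lt_succ q.1.isLt, Nat.le_of_lt_succ q.2.isLt⟩
  · obtain ⟨p, rfl⟩ := exists_gridVal_eq h₁ h₂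
    exact ⟨p, p, hS.refl p, rfl, rfl⟩
  · rintro _ _ _ ⟨p, q, h, rfl, rfl⟩ ⟨q', r, h', hq, rfl⟩
    obtain rfl := gridVal_injective hq
    exact ⟨p, r, hS.trans h h', rfl, rfl⟩
  · rintro _ _ r ⟨p, q, h, rfl, rfl⟩ h₁ h₂
    obtain ⟨r, rfl⟩ := exists_gridVal_eq (h₁.trans (Nat.le_of_lt_succ q.1.isLt))
      (h₂.trans (Nat.le_of_lt_succ q.2.isLt))
    exact ⟨p ⊓ r, r, hS.restrict h ⟨h₁, h₂⟩, gridVal_inf p r, rfl⟩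

/-- Transfer systems on the grid inside `ℕ × ℕ` are the same as transfer systems on the lattice
`Fin (m + 1) × Fin (n + 1)`. -/
def transferSystemGridEquiv (m n : ℕ) :
    {R : ℕ × ℕ → ℕ × ℕ → Prop // IsTransferSystemGrid m n R} ≃
      {S : Fin (m + 1) × Fin (n + 1) → Fin (m + 1) × Fin (n + 1) → Prop // IsTransferSystem S} where
  toFun R := ⟨Function.onFun R.1 gridVal, R.2.onFun_gridVal⟩
  invFun S := ⟨Relation.Map S.1 gridVal gridVal, S.2.map_gridVal⟩
  left_inv R := Subtype.ext R.2.map_onFun_gridVal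
  right_inv _ := Subtype.ext (Relation.onFun_map_eq_of_injective gridVal_injective)

end Grid

section TwoLayer

variable {L M : Type*}

/-- The part of a relation on `L × M` that goes from the copy `L × {i}` of `L` to the copy
`L × {j}`. -/
def layerRel (R : L × M → L × M → Prop) (i j : M) (a b : L) : Prop := R (a, i) (b, j)

/-- The relation on two copies of `L` that is `R₀` on the bottom copy `L × {0}`, `R₁` on the top
copy `L × {1}`, and `X` from the bottom copy to the top one. -/
def twoLayer (R₀ R₁ X : L → L → Prop) : L × Fin 2 → L × Fin 2 → Prop
  | (a, 0), (b, 0) => R₀ a b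
  | (a, 1), (b, 1) => R₁ a b
  | (a, 0), (b, 1) => X a b
  | (_, 1), (_, 0) => False

/-- `X` is a bridge from `R₀` to `R₁` if it satisfies the axioms for the part of a transfer system
that goes from a copy of `L` carrying `R₀` to a higher copy of `L` carrying `R₁`. -/
structure IsBridge [SemilatticeInf L] (R₀ R₁ X : L → L → Prop) : Prop where
  le_source {a b : L} : X a b → R₀ a b
  trans_left {a b c : L} : R₀ a b → X b c → X a c
  trans_right {a b c : L} : X a b → R₁ b c → X a c
  restrict {a b c : L} : X a b → c ≤ b → X (a ⊓ c) c

theorem twoLayer_inj {R₀ R₁ X S₀ S₁ Y : L → L → Prop} :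
    twoLayer R₀ R₁ X = twoLayer S₀ S₁ Y ↔ R₀ = S₀ ∧ R₁ = S₁ ∧ X = Y := by
  refine ⟨fun h => ⟨?_, ?_, ?_⟩, by rintro ⟨rfl, rfl, rfl⟩; rfl⟩
  · exact congrArg (layerRel · 0 0) h
  · exact congrArg (layerRel · 1 1) h
  · exact congrArg (layerRel · 0 1) h

variable [SemilatticeInf L]

section LayerRel

variable [SemilatticeInf M] {R : L × M → L × M → Prop}

theorem IsTransferSystem.layerRel_self (hR : IsTransferSystem R) (i : M) :
    IsTransferSystem (layerRel R i i) where
  le h := (hR.le h).1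
  refl a := hR.refl (a, i)
  trans h h' := hR.trans h h'
  restrict {a b c} h hc := by
    simpa only [layerRel, Prod.mk_inf_mk, inf_idem] using hR.restrict (c := (c, i)) h ⟨hc, le_rfl⟩

theorem IsTransferSystem.layerRel_le_layerRel_self (hR : IsTransferSystem R) {i j k : M}
    (hk : k ≤ i) : layerRel R i j ≤ layerRel R k k := fun a b h => by
  obtain ⟨hab, hij⟩ := hR.le h
  simpa only [layerRel, Prod.mk_inf_mk, inf_eq_left.2 hab, inf_eq_right.2 hk] using
    hR.restrict (c := (b, k)) h ⟨le_rfl, hk.trans hij⟩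

theorem IsTransferSystem.isBridge_layerRel (hR : IsTransferSystem R) {i j : M} (hij : i ≤ j) :
    IsBridge (layerRel R i i) (layerRel R j j) (layerRel R i j) where
  le_source h := hR.layerRel_le_layerRel_self le_rfl _ _ h
  trans_left h h' := hR.trans h h'
  trans_right h h' := hR.trans h h'
  restrict {a b c} h hc := by
    simpa only [layerRel, Prod.mk_inf_mk, inf_eq_left.2 hij] using
      hR.restrict (c := (c, j)) h ⟨hc, le_rfl⟩

end LayerRel

theorem IsTransferSystem.twoLayer_layerRel {R : L × Fin 2 → L × Fin 2 → Prop}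
    (hR : IsTransferSystem R) :
    twoLayer (layerRel R 0 0) (layerRel R 1 1) (layerRel R 0 1) = R := by
  ext ⟨a, i⟩ ⟨b, j⟩
  fin_cases i <;> fin_cases j <;> try rfl
  exact ⟨False.elim, fun h => (Fin.zero_lt_one.not_ge (hR.le h).2).elim⟩

theorem IsBridge.isTransferSystem_twoLayer {R₀ R₁ X : L → L → Prop} (h₀ : IsTransferSystem R₀)
    (h₁ : IsTransferSystem R₁) (hle : R₁ ≤ R₀) (hX : IsBridge R₀ R₁ X) :
    IsTransferSystem (twoLayer R₀ R₁ X) := by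
  refine ⟨?_, ?_, ?_, ?_⟩
  · rintro ⟨a, i⟩ ⟨b, j⟩ hab
    fin_cases i <;> fin_cases j
    exacts [⟨h₀.le hab, le_rfl⟩, ⟨h₀.le (hX.le_source hab), Fin.zero_le _⟩, hab.elim,
      ⟨h₁.le hab, le_rfl⟩]
  · rintro ⟨a, i⟩
    fin_cases i
    exacts [h₀.refl a, h₁.refl a]
  · rintro ⟨a, i⟩ ⟨b, j⟩ ⟨c, k⟩ hab hbc
    fin_cases i <;> fin_cases j <;> fin_cases k
    exacts [h₀.trans hab hbc, hX.trans_left hab hbc, hbc.elim, hX.trans_right hab hbc,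
      hab.elim, hab.elim, hbc.elim, h₁.trans hab hbc]
  · rintro ⟨a, i⟩ ⟨b, j⟩ ⟨c, k⟩ hab ⟨hc, hk⟩
    fin_cases i <;> fin_cases j <;> fin_cases k
    exacts [h₀.restrict hab hc, (Fin.zero_lt_one.not_ge hk).elim,
      h₀.restrict (hX.le_source hab) hc, hX.restrict hab hc, hab.elim, hab.elim,
      h₀.restrict (hle _ _ hab) hc, h₁.restrict hab hc]

theorem isTransferSystem_twoLayer_iff {R₀ R₁ X : L → L → Prop} :
    IsTransferSystem (twoLayer R₀ R₁ X) ↔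
      IsTransferSystem R₀ ∧ IsTransferSystem R₁ ∧ R₁ ≤ R₀ ∧ IsBridge R₀ R₁ X := by
  have h_bottom : layerRel (twoLayer R₀ R₁ X) 0 0 = R₀ := rfl
  have h_top : layerRel (twoLayer R₀ R₁ X) 1 1 = R₁ := rfl
  have h_cross : layerRel (twoLayer R₀ R₁ X) 0 1 = X := rfl
  constructor
  · intro h
    rw [← h_bottom, ← h_top, ← h_cross]
    exact ⟨h.layerRel_self 0, h.layerRel_self 1, h.layerRel_le_layerRel_self (Fin.zero_le 1),
      h.isBridge_layerRel (Fin.zero_le 1)⟩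
  · rintro ⟨h₀, h₁, hle, hX⟩
    exact hX.isTransferSystem_twoLayer h₀ h₁ hle

end TwoLayer

section Chain

variable {N : ℕ}

/-- The relation on the chain `Fin N` under which `a` reaches exactly the points of the interval
`[a, f a)`. -/
def reachRel (f : Fin N → ℕ) (a b : Fin N) : Prop := a ≤ b ∧ b < f a

/-- The functions that encode a relation through `reachRel` without redundancy; `f a = a` means
that `a` reaches nothing. -/
def IsReach (f : Fin N → ℕ) : Prop := ∀ a, a ≤ f a ∧ f a ≤ N

theorem le_of_forall_fin_lt {s t : ℕ} (hs : s ≤ N) (h : ∀ c : Fin N, c < s → c < t) : s ≤ t := by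
  by_contra! hts
  exact lt_irrefl t (h ⟨t, hts.trans_le hs⟩ hts)

theorem reachRel_le_reachRel_iff {f g : Fin N → ℕ} (hf : ∀ a, f a ≤ N) (hg : ∀ a, a ≤ g a) :
    reachRel f ≤ reachRel g ↔ f ≤ g := by
  refine ⟨fun h a => le_of_forall_fin_lt (hf a) fun c hc => ?_,
    fun h a b hab => ⟨hab.1, hab.2.trans_le (h a)⟩⟩
  rcases le_or_gt a c with hac | hca
  · exact (h a c ⟨hac, hc⟩).2
  · exact lt_of_lt_of_le hca (hg a)

theorem reachRel_injOn : Set.InjOn reachRel {f : Fin N → ℕ | IsReach f} := fun _ hf _ hg h =>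
  le_antisymm ((reachRel_le_reachRel_iff (fun a => (hf a).2) fun a => (hg a).1).1 h.le)
    ((reachRel_le_reachRel_iff (fun a => (hg a).2) fun a => (hf a).1).1 h.ge)

theorem exists_isReach_reachRel_eq_of_interval {R : Fin N → Fin N → Prop}
    (le : ∀ a b, R a b → a ≤ b) (interval : ∀ a b c, R a b → a ≤ c → c ≤ b → R a c) :
    ∃ f, IsReach f ∧ reachRel f = R := by
  classical
  have exists_unreached (a : Fin N) : ∃ t : ℕ, a ≤ t ∧ ∀ ht : t < N, ¬ R a ⟨t, ht⟩ :=
    ⟨N, a.isLt.le, fun ht => absurd ht (lt_irrefl N)⟩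
  refine ⟨fun a => Nat.find (exists_unreached a), fun a => ⟨(Nat.find_spec (exists_unreached a)).1,
    Nat.find_min' _ ⟨a.isLt.le, fun ht => absurd ht (lt_irrefl N)⟩⟩, ?_⟩
  ext a b
  constructor
  · rintro ⟨hab, hb⟩
    by_contra hR
    exact Nat.find_min (exists_unreached a) hb ⟨hab, fun _ => hR⟩
  · refine fun hR => ⟨le a b hR, lt_of_not_ge fun hb => ?_⟩
    obtain ⟨hat, ht⟩ := Nat.find_spec (exists_unreached a)
    exact ht (hb.trans_lt b.isLt) (interval a b _ hR hat hb)

theorem IsTransferSystem.exists_isReach_reachRel_eq {R : Fin N → Fin N → Prop}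
    (hR : IsTransferSystem R) : ∃ f, IsReach f ∧ reachRel f = R :=
  exists_isReach_reachRel_eq_of_interval (fun _ _ => hR.le) fun a _ c hab hac hcb => by
    simpa only [inf_eq_left.2 hac] using hR.restrict hab hcb

theorem IsBridge.exists_isReach_reachRel_eq {R₀ R₁ X : Fin N → Fin N → Prop}
    (hR₀ : IsTransferSystem R₀) (hX : IsBridge R₀ R₁ X) : ∃ f, IsReach f ∧ reachRel f = X :=
  exists_isReach_reachRel_eq_of_interval (fun _ _ h => hR₀.le (hX.le_source h))
    fun a _ c hab hac hcb => by simpa only [inf_eq_left.2 hac] using hX.restrict hab hcb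

theorem isTransferSystem_reachRel_iff {f : Fin N → ℕ} (hf : ∀ a, f a ≤ N) :
    IsTransferSystem (reachRel f) ↔
      (∀ a, a < f a) ∧ ∀ a b, a ≤ b → b < f a → f b ≤ f a := by
  constructor
  · refine fun h => ⟨fun a => (h.refl a).2, fun a b hab hb => ?_⟩
    refine le_of_forall_fin_lt (hf b) fun c hc => ?_
    rcases le_total b c with hbc | hcb
    · exact (h.trans ⟨hab, hb⟩ ⟨hbc, hc⟩).2
    · exact lt_of_le_of_lt hcb hb
  · rintro ⟨refl, anti⟩
    refine ⟨And.left, fun a => ⟨le_rfl, refl a⟩, fun {a b c} hab hbc => ?_,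
      fun {a b c} hab hcb => ⟨inf_le_right, ?_⟩⟩
    · exact ⟨hab.1.trans hbc.1, hbc.2.trans_le (anti a b hab.1 hab.2)⟩
    · rcases le_total a c with hac | hca
      · rw [inf_eq_left.2 hac]
        exact lt_of_le_of_lt hcb hab.2
      · rw [inf_eq_right.2 hca]
        exact refl c

theorem isBridge_reachRel_iff {u v w : Fin N → ℕ} (hu : ∀ a, a ≤ u a) (hv : ∀ a, v a ≤ N)
    (hw : ∀ a, w a ≤ N) :
    IsBridge (reachRel u) (reachRel v) (reachRel w) ↔
      w ≤ u ∧ (∀ a b, a ≤ b → b < w b → a < w a) ∧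
        (∀ a b, a ≤ b → b < u a → b < w b → w b ≤ w a) ∧
        ∀ a b, a ≤ b → b < w a → v b ≤ w a := by
  rw [← reachRel_le_reachRel_iff hw hu]
  constructor
  · refine fun h => ⟨fun _ _ => h.le_source, fun a b hab hb => ?_, fun a b hab hb hwb => ?_,
      fun a b hab hb => ?_⟩
    · have haa := h.restrict ⟨le_rfl, hb⟩ hab
      rw [inf_eq_right.2 hab] at haa
      exact haa.2
    · have hba : b < w a := (h.trans_left ⟨hab, hb⟩ ⟨le_rfl, hwb⟩).2
      refine le_of_forall_fin_lt (hw b) fun c hc => ?_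
      rcases le_total b c with hbc | hcb
      · exact (h.trans_left ⟨hab, hb⟩ ⟨hbc, hc⟩).2
      · exact lt_of_le_of_lt hcb hba
    · refine le_of_forall_fin_lt (hv b) fun c hc => ?_
      rcases le_total b c with hbc | hcb
      · exact (h.trans_right ⟨hab, hb⟩ ⟨hbc, hc⟩).2
      · exact lt_of_le_of_lt hcb hb
  · rintro ⟨le, down, left, right⟩
    refine ⟨le _ _, fun {a b c} hab hbc => ⟨hab.1.trans hbc.1, ?_⟩,
      fun {a b c} hab hbc => ⟨hab.1.trans hbc.1, ?_⟩, fun {a b c} hab hcb => ⟨inf_le_right, ?_⟩⟩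
    · exact hbc.2.trans_le (left a b hab.1 hab.2 (lt_of_le_of_lt hbc.1 hbc.2))
    · exact hbc.2.trans_le (right a b hab.1 hab.2)
    · rcases le_total a c with hac | hca
      · rw [inf_eq_left.2 hac]
        exact lt_of_le_of_lt hcb hab.2
      · rw [inf_eq_right.2 hca]
        exact down c a hca (lt_of_le_of_lt hab.1 hab.2)

/-- The functions encoding the transfer systems on `Fin N` contained in `reachRel u`. -/
def chainReaches (u : Fin N → ℕ) : Finset (Fin N → ℕ) :=
  {v ∈ Fintype.piFinset fun a => Ioc (a : ℕ) (u a) | ∀ a b, a ≤ b → b < v a → v b ≤ v a}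

/-- The functions encoding the bridges from `reachRel u` to `reachRel v`. -/
def bridgeReaches (u v : Fin N → ℕ) : Finset (Fin N → ℕ) :=
  {w ∈ Fintype.piFinset fun a => Icc (a : ℕ) (u a) |
    (∀ a b, a ≤ b → b < w b → a < w a) ∧
    (∀ a b, a ≤ b → b < u a → b < w b → w b ≤ w a) ∧
    ∀ a b, a ≤ b → b < w a → v b ≤ w a}

theorem mem_chainReaches_iff {u v : Fin N → ℕ} (hu : ∀ a, u a ≤ N) :
    v ∈ chainReaches u ↔ IsReach v ∧ v ≤ u ∧ IsTransferSystem (reachRel v) := by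
  simp only [chainReaches, mem_filter, Fintype.mem_piFinset, mem_Ioc]
  constructor
  · rintro ⟨bounds, anti⟩
    have hvN (a : Fin N) : v a ≤ N := (bounds a).2.trans (hu a)
    exact ⟨fun a => ⟨(bounds a).1.le, hvN a⟩, fun a => (bounds a).2,
      (isTransferSystem_reachRel_iff hvN).2 ⟨fun a => (bounds a).1, anti⟩⟩
  · rintro ⟨hv, hvu, h⟩
    obtain ⟨refl, anti⟩ := (isTransferSystem_reachRel_iff fun a => (hv a).2).1 h
    exact ⟨fun a => ⟨refl a, hvu a⟩, anti⟩

theorem mem_bridgeReaches_iff {u v w : Fin N → ℕ} (hu : IsReach u) (hv : IsReach v) :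
    w ∈ bridgeReaches u v ↔
      IsReach w ∧ IsBridge (reachRel u) (reachRel v) (reachRel w) := by
  simp only [bridgeReaches, mem_filter, Fintype.mem_piFinset, mem_Icc]
  constructor
  · rintro ⟨bounds, h⟩
    have hwN (a : Fin N) : w a ≤ N := (bounds a).2.trans (hu a).2
    exact ⟨fun a => ⟨(bounds a).1, hwN a⟩, (isBridge_reachRel_iff (fun a => (hu a).1)
      (fun a => (hv a).2) hwN).2 ⟨fun a => (bounds a).2, h⟩⟩
  · rintro ⟨hw, h⟩
    obtain ⟨hwu, h⟩ := (isBridge_reachRel_iff (fun a => (hu a).1) (fun a => (hv a).2)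
      fun a => (hw a).2).1 h
    exact ⟨fun a => ⟨(hw a).1, hwu a⟩, h⟩

/-- The triples of functions encoding the transfer systems on `Fin N × Fin 2`. -/
def reachTriples (N : ℕ) : Finset (Σ _ _ : Fin N → ℕ, Fin N → ℕ) :=
  (chainReaches fun _ => N).sigma fun u => (chainReaches u).sigma fun v => bridgeReaches u v

theorem mem_reachTriples_iff {u v w : Fin N → ℕ} :
    ⟨u, v, w⟩ ∈ reachTriples N ↔ (IsReach u ∧ IsReach v ∧ IsReach w) ∧
      IsTransferSystem (twoLayer (reachRel u) (reachRel v) (reachRel w)) := by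
  simp only [reachTriples, mem_sigma, mem_chainReaches_iff fun _ => le_rfl,
    isTransferSystem_twoLayer_iff]
  constructor
  · rintro ⟨⟨hu, -, hRu⟩, hv, hw⟩
    obtain ⟨hv, hvu, hRv⟩ := (mem_chainReaches_iff fun a => (hu a).2).1 hv
    obtain ⟨hw, hRw⟩ := (mem_bridgeReaches_iff hu hv).1 hw
    exact ⟨⟨hu, hv, hw⟩, hRu, hRv,
      (reachRel_le_reachRel_iff (fun a => (hv a).2) fun a => (hu a).1).2 hvu, hRw⟩
  · rintro ⟨⟨hu, hv, hw⟩, hRu, hRv, hvu, hRw⟩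
    have hvu := (reachRel_le_reachRel_iff (fun a => (hv a).2) fun a => (hu a).1).1 hvu
    exact ⟨⟨hu, fun a => (hu a).2, hRu⟩, (mem_chainReaches_iff fun a => (hu a).2).2 ⟨hv, hvu, hRv⟩,
      (mem_bridgeReaches_iff hu hv).2 ⟨hw, hRw⟩⟩

theorem bijOn_twoLayer_reachRel : Set.BijOn
    (fun t : Σ _ _ : Fin N → ℕ, Fin N → ℕ =>
      twoLayer (reachRel t.1) (reachRel t.2.1) (reachRel t.2.2))
    (reachTriples N) {R | IsTransferSystem R} := by
  refine ⟨fun t ht => (mem_reachTriples_iff.1 ht).2, ?_, fun R hR => ?_⟩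
  · rintro ⟨u, v, w⟩ ht ⟨u', v', w'⟩ ht' h
    obtain ⟨hu, hv, hw⟩ := (mem_reachTriples_iff.1 ht).1
    obtain ⟨hu', hv', hw'⟩ := (mem_reachTriples_iff.1 ht').1
    obtain ⟨hRu, hRv, hRw⟩ := twoLayer_inj.1 h
    obtain rfl := reachRel_injOn hu hu' hRu
    obtain rfl := reachRel_injOn hv hv' hRv
    obtain rfl := reachRel_injOn hw hw' hRw
    rfl
  · replace hR : IsTransferSystem R := hR
    have h₀ := hR.layerRel_self 0
    obtain ⟨u, hu, hRu⟩ := h₀.exists_isReach_reachRel_eq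
    obtain ⟨v, hv, hRv⟩ := (hR.layerRel_self 1).exists_isReach_reachRel_eq
    obtain ⟨w, hw, hRw⟩ := (hR.isBridge_layerRel (Fin.zero_le 1)).exists_isReach_reachRel_eq h₀
    have hRuvw : twoLayer (reachRel u) (reachRel v) (reachRel w) = R := by
      rw [hRu, hRv, hRw, hR.twoLayer_layerRel]
    exact ⟨⟨u, v, w⟩, mem_reachTriples_iff.2 ⟨⟨hu, hv, hw⟩, hRuvw.symm ▸ hR⟩, hRuvw⟩

end Chain

theorem card_isTransferSystemGrid_one (m : ℕ) :
    Nat.card {R : ℕ × ℕ → ℕ × ℕ → Prop // IsTransferSystemGrid m 1 R} =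
      #(reachTriples (m + 1)) := by
  rw [Nat.card_congr (transferSystemGridEquiv m 1)]
  exact (Nat.card_congr (bijOn_twoLayer_reachRel.equiv _)).symm.trans
    (Nat.card_eq_finsetCard _)

theorem num_transfer_systems_grid_4x2 :
    Nat.card {R : ℕ × ℕ → ℕ × ℕ → Prop // IsTransferSystemGrid 3 1 R} = 544 := by
  rw [card_isTransferSystemGrid_one]
  decide +kernel
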